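/- The volume of the regular ideal octahedron, v_oct = 8Λ(π/4), satisfies |8Λ(π/4) − 3.663863| < 10⁻⁶. -/

import Mathlib

open Real MeasureTheory

/-- The Lobachevsky function `Λ(θ) = −∫₀^θ log |2 sin t| dt`. -/
noncomputable def lob (θ : ℝ) : ℝ := - ∫ t in (0:ℝ)..θ, Real.log |2 * Real.sin t|

/-!
Integrating by parts, `Λ(θ) = ∫₀^θ t cot t dt - θ log (2 sin θ)`. The partial fraction expansion of
the cotangent, with each fraction expanded as a geometric series, gives
`1 - t cot t = ∑ 2 ζ(2k) (t/π)^(2k)`, summed over `k ≥ 1`. Hence `θ (1 - log (2 sin θ)) - Λ(θ)` is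
a power series with positive coefficients; at `θ = π/4` its terms decrease faster than `16^(-k)`, so
four of them and a geometric bound on the remainder determine `8Λ(π/4)` to seven digits.

At `t = 0` the expression `t * cot t` has the junk value `0`, so it is written `cos t / sinc t`.
-/

/-- The zeta value `ζ(2k)` as a real number, for `k ≠ 0`; at `k = 0` the series diverges and the
definition has the junk value `0`. -/
noncomputable def evenZeta (k : ℕ) : ℝ := ∑' n : ℕ, 1 / ((n : ℝ) + 1) ^ (2 * k)

lemma hasSum_evenZeta_bernoulli {k : ℕ} (hk : k ≠ 0) :
    HasSum (fun n : ℕ => 1 / ((n : ℝ) + 1) ^ (2 * k))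
      ((-1) ^ (k + 1) * 2 ^ (2 * k - 1) * π ^ (2 * k) * bernoulli (2 * k) / (2 * k).factorial) := by
  simpa [hk] using (hasSum_nat_add_iff' 1).mpr (hasSum_zeta_nat hk)

lemma evenZeta_eq_bernoulli {k : ℕ} (hk : k ≠ 0) :
    evenZeta k =
      (-1) ^ (k + 1) * 2 ^ (2 * k - 1) * π ^ (2 * k) * bernoulli (2 * k) / (2 * k).factorial :=
  (hasSum_evenZeta_bernoulli hk).tsum_eq

lemma hasSum_evenZeta {k : ℕ} (hk : k ≠ 0) :
    HasSum (fun n : ℕ => 1 / ((n : ℝ) + 1) ^ (2 * k)) (evenZeta k) :=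
  (hasSum_evenZeta_bernoulli hk).summable.hasSum

lemma evenZeta_nonneg (k : ℕ) : 0 ≤ evenZeta k :=
  tsum_nonneg fun n => by positivity

lemma evenZeta_le_evenZeta {j k : ℕ} (hj : j ≠ 0) (hjk : j ≤ k) : evenZeta k ≤ evenZeta j := by
  refine hasSum_le (fun n => ?_) (hasSum_evenZeta (by omega)) (hasSum_evenZeta hj)
  have hn : (1 : ℝ) ≤ n + 1 := by simp
  gcongr

lemma evenZeta_one : evenZeta 1 = π ^ 2 / 6 := by
  rw [evenZeta_eq_bernoulli one_ne_zero, show bernoulli (2 * 1) = 1 / 6 by decide +kernel]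
  norm_num [Nat.factorial]
  ring

lemma evenZeta_two : evenZeta 2 = π ^ 4 / 90 := by
  rw [evenZeta_eq_bernoulli (by norm_num), show bernoulli (2 * 2) = -1 / 30 by decide +kernel]
  norm_num [Nat.factorial]
  ring

lemma evenZeta_three : evenZeta 3 = π ^ 6 / 945 := by
  rw [evenZeta_eq_bernoulli (by norm_num), show bernoulli (2 * 3) = 1 / 42 by decide +kernel]
  norm_num [Nat.factorial]
  ring

lemma evenZeta_four : evenZeta 4 = π ^ 8 / 9450 := by
  rw [evenZeta_eq_bernoulli (by norm_num), show bernoulli (2 * 4) = -1 / 30 by decide +kernel]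
  norm_num [Nat.factorial]
  ring

lemma evenZeta_five : evenZeta 5 = π ^ 10 / 93555 := by
  rw [evenZeta_eq_bernoulli (by norm_num), show bernoulli (2 * 5) = 5 / 66 by decide +kernel]
  norm_num [Nat.factorial]
  ring

lemma mul_sinc (x : ℝ) : x * sinc x = sin x := by
  rcases eq_or_ne x 0 with rfl | hx
  · simp
  · rw [sinc_of_ne_zero hx, mul_div_cancel₀ _ hx]

lemma sinc_ne_zero_of_abs_lt_pi {x : ℝ} (hx : |x| < π) : sinc x ≠ 0 := by
  rcases eq_or_ne x 0 with rfl | h0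
  · simp
  · obtain ⟨hl, hr⟩ := abs_lt.mp hx
    rw [sinc_of_ne_zero h0]
    exact div_ne_zero ((sin_eq_zero_iff_of_lt_of_lt hl hr).not.mpr h0) h0

lemma hasSum_one_sub_cos_div_sinc_pi_mul {x : ℝ} (hx : sinc (π * x) ≠ 0) :
    HasSum (fun n : ℕ => 2 * x ^ 2 / (((n : ℝ) + 1) ^ 2 - x ^ 2))
      (1 - cos (π * x) / sinc (π * x)) := by
  rcases eq_or_ne x 0 with rfl | h0
  · simp [hasSum_zero]
  have hxZ : (x : ℂ) ∈ Complex.integerComplement := by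
    rintro ⟨m, hm⟩
    obtain rfl : (m : ℝ) = x := by exact_mod_cast hm
    apply hx
    rw [sinc_of_ne_zero (by positivity), mul_comm, sin_int_mul_pi, zero_div]
  have hcot := (summable_cotTerm hxZ).hasSum.mul_left (-x : ℂ)
  have hxC : (x : ℂ) ≠ 0 := by exact_mod_cast h0
  have hlim : (1 - cos (π * x) / sinc (π * x) : ℝ) = (-x : ℂ) * ∑' n, cotTerm x n := by
    rw [sinc_of_ne_zero (by positivity)]
    simp only [cotTerm]
    rw [← cot_series_rep' hxZ, ← Complex.ofReal_mul, ← Complex.ofReal_cot, cot_eq_cos_div_sin]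
    push_cast
    field_simp
    ring
  rw [← Complex.hasSum_ofReal, hlim]
  refine hcot.congr_fun fun n => ?_
  rw [cotTerm_identity hxZ,
    show ((x : ℂ) + (n + 1)) * (x - (n + 1)) = -((n + 1) ^ 2 - x ^ 2) by ring, one_div, inv_neg]
  push_cast
  ring

lemma hasSum_two_mul_div_pow {x a : ℝ} (hxa : |x| < a) :
    HasSum (fun k : ℕ => 2 * x ^ (2 * (k + 1)) * (1 / a ^ (2 * (k + 1))))
      (2 * x ^ 2 / (a ^ 2 - x ^ 2)) := by
  have ha : 0 < a := (abs_nonneg x).trans_lt hxa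
  have hlt : x ^ 2 < a ^ 2 := sq_lt_sq' (abs_lt.mp hxa).1 (abs_lt.mp hxa).2
  have hgeom := (hasSum_geometric_of_lt_one (r := x ^ 2 / a ^ 2) (by positivity)
    ((div_lt_one (by positivity)).mpr hlt)).mul_left (2 * (x ^ 2 / a ^ 2))
  have hne : a ^ 2 - x ^ 2 ≠ 0 := (sub_pos.mpr hlt).ne'
  convert! hgeom using 1
  · ext k
    rw [pow_mul, pow_mul, div_pow]
    ring
  · field_simp

lemma hasSum_of_hasSum_swap {α β : Type*} {f : α → β → ℝ} {g : α → ℝ} {h : β → ℝ} {s : ℝ}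
    (hf : ∀ a b, 0 ≤ f a b) (hg : ∀ a, HasSum (f a) (g a)) (hh : ∀ b, HasSum (f · b) (h b))
    (hs : HasSum g s) : HasSum h s := by
  have hsum : Summable fun p : α × β => f p.1 p.2 := by
    refine (summable_prod_of_nonneg fun p => hf p.1 p.2).mpr ⟨fun a => (hg a).summable, ?_⟩
    simpa only [fun a => (hg a).tsum_eq] using hs.summable
  have hs' : HasSum (fun p : α × β => f p.1 p.2) s := by
    rw [hs.unique (hsum.hasSum.prod_fiberwise hg)]
    exact hsum.hasSum
  exact ((Equiv.prodComm β α).hasSum_iff.mpr hs').prod_fiberwise hh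

theorem hasSum_one_sub_cos_div_sinc {t : ℝ} (ht : |t| < π) :
    HasSum (fun k : ℕ => 2 * (t / π) ^ (2 * (k + 1)) * evenZeta (k + 1))
      (1 - cos t / sinc t) := by
  have hx : |t / π| < 1 := by
    rwa [abs_div, abs_of_pos pi_pos, div_lt_one pi_pos]
  have hπ : π * (t / π) = t := mul_div_cancel₀ t pi_ne_zero
  have hcot := hasSum_one_sub_cos_div_sinc_pi_mul (x := t / π)
    (by rw [hπ]; exact sinc_ne_zero_of_abs_lt_pi ht)
  rw [hπ] at hcot
  refine hasSum_of_hasSum_swap (fun n k => ?_) (fun n => hasSum_two_mul_div_pow ?_)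
    (fun k => (hasSum_evenZeta k.succ_ne_zero).mul_left _) hcot
  · rw [pow_mul (t / π)]
    positivity
  · exact hx.trans_le (by simp)

lemma sinc_ne_zero_of_mem_uIcc {θ t : ℝ} (hθ : |θ| < π) (ht : t ∈ Set.uIcc 0 θ) : sinc t ≠ 0 :=
  sinc_ne_zero_of_abs_lt_pi <|
    (by simpa using Set.abs_sub_left_of_mem_uIcc ht : |t| ≤ |θ|).trans_lt hθ

lemma intervalIntegrable_cos_div_sinc {θ : ℝ} (hθ : |θ| < π) :
    IntervalIntegrable (fun t => cos t / sinc t) volume 0 θ :=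
  (continuous_cos.continuousOn.div continuous_sinc.continuousOn fun _ =>
    sinc_ne_zero_of_mem_uIcc hθ).intervalIntegrable

lemma continuousOn_mul_log_two_mul_sin :
    ContinuousOn (fun t => t * log (2 * sin t)) {t | sinc t ≠ 0} := by
  have hcont : ContinuousOn (fun t => 2 * sin t * log (2 * sin t) / (2 * sinc t))
      {t | sinc t ≠ 0} :=
    (continuous_mul_log.comp (continuous_const.mul continuous_sin)).continuousOn.div
      (continuous_const.mul continuous_sinc).continuousOn fun t ht => mul_ne_zero two_ne_zero ht
  refine hcont.congr fun t (ht : sinc t ≠ 0) => ?_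
  simp only [← mul_sinc t]
  field_simp

lemma hasDerivAt_mul_log_two_mul_sin {t : ℝ} (ht : sin t ≠ 0) :
    HasDerivAt (fun t => t * log (2 * sin t)) (log (2 * sin t) + cos t / sinc t) t := by
  have h0 : t ≠ 0 := by rintro rfl; simp at ht
  refine ((hasDerivAt_id t).mul
    (((hasDerivAt_sin t).const_mul 2).log (mul_ne_zero two_ne_zero ht))).congr_deriv ?_
  rw [sinc_of_ne_zero h0]
  simp only [id]
  field_simp

lemma intervalIntegrable_log_two_mul_sin (a b : ℝ) :
    IntervalIntegrable (fun t => log (2 * sin t)) volume a b :=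
  MeromorphicOn.intervalIntegrable_log (f := fun t => 2 * sin t) fun t _ => by fun_prop

lemma lob_eq_integral_cos_div_sinc {θ : ℝ} (hθ : |θ| < π) :
    lob θ = (∫ t in (0 : ℝ)..θ, cos t / sinc t) - θ * log (2 * sin θ) := by
  have hcot := intervalIntegrable_cos_div_sinc hθ
  have hlog := intervalIntegrable_log_two_mul_sin 0 θ
  have hsin : ∀ t ∈ Set.Ioo (min 0 θ) (max 0 θ), sin t ≠ 0 := fun t ht => by
    have h0 : t ≠ 0 := by
      rintro rfl
      rcases le_total 0 θ with h | h <;> simp [h] at ht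
    rw [← mul_sinc]
    exact mul_ne_zero h0 (sinc_ne_zero_of_mem_uIcc hθ (Set.Ioo_subset_Icc_self ht))
  have hparts := intervalIntegral.integral_eq_sub_of_hasDeriv_right
    (continuousOn_mul_log_two_mul_sin.mono fun _ => sinc_ne_zero_of_mem_uIcc hθ)
    (fun t ht => (hasDerivAt_mul_log_two_mul_sin (hsin t ht)).hasDerivWithinAt) (hlog.add hcot)
  rw [intervalIntegral.integral_add hlog hcot] at hparts
  simp only [lob, log_abs]
  linarith

/-- The `k`-th term `2ζ(2k + 2) θ^(2k+3) / ((2k + 3) π^(2k+2))` of the power series that measures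
how far `Λ(θ)` is from `θ (1 - log (2 sin θ))`. -/
noncomputable def lobTerm (θ : ℝ) (k : ℕ) : ℝ :=
  2 * θ * (θ / π) ^ (2 * (k + 1)) * evenZeta (k + 1) / (2 * k + 3)

theorem hasSum_integral_one_sub_cos_div_sinc {θ : ℝ} (hθ : |θ| < π) :
    HasSum (lobTerm θ) (∫ t in (0 : ℝ)..θ, (1 - cos t / sinc t)) := by
  have habs : ∀ t ∈ Set.uIoc 0 θ, |t| ≤ |θ| := fun t ht => by
    simpa using Set.abs_sub_left_of_mem_uIcc (Set.uIoc_subset_uIcc ht)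
  have hseries := intervalIntegral.hasSum_integral_of_dominated_convergence
    (μ := volume) (a := 0) (b := θ)
    (F := fun (k : ℕ) t => 2 * (t / π) ^ (2 * (k + 1)) * evenZeta (k + 1))
    (f := fun t => 1 - cos t / sinc t)
    (fun k _ => 2 * (θ / π) ^ (2 * (k + 1)) * evenZeta (k + 1))
    (fun k => by fun_prop)
    (fun k => ae_of_all _ fun t ht => ?_)
    (ae_of_all _ fun t _ => (hasSum_one_sub_cos_div_sinc hθ).summable)
    intervalIntegrable_const
    (ae_of_all _ fun t ht => hasSum_one_sub_cos_div_sinc ((habs t ht).trans_lt hθ))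
  · refine hseries.congr_fun fun k => ?_
    simp only [lobTerm, div_pow, intervalIntegral.integral_mul_const,
      intervalIntegral.integral_const_mul, intervalIntegral.integral_div, integral_pow]
    push_cast
    field_simp
    ring
  · have hsq : (t / π) ^ 2 ≤ (θ / π) ^ 2 := by
      rw [div_pow, div_pow]
      exact div_le_div_of_nonneg_right (sq_le_sq.mpr (habs t ht)) (sq_nonneg π)
    have := evenZeta_nonneg (k + 1)
    simp only [pow_mul]
    rw [norm_of_nonneg (by positivity)]
    gcongr

theorem hasSum_lobTerm {θ : ℝ} (hθ : |θ| < π) :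
    HasSum (lobTerm θ) (θ * (1 - log (2 * sin θ)) - lob θ) := by
  have hintegral : (∫ t in (0 : ℝ)..θ, (1 - cos t / sinc t)) =
      θ * (1 - log (2 * sin θ)) - lob θ := by
    rw [intervalIntegral.integral_sub intervalIntegrable_const (intervalIntegrable_cos_div_sinc hθ),
      lob_eq_integral_cos_div_sinc hθ, intervalIntegral.integral_const, smul_eq_mul]
    ring
  exact hintegral ▸ hasSum_integral_one_sub_cos_div_sinc hθ

lemma lobTerm_nonneg {θ : ℝ} (hθ : 0 ≤ θ) (k : ℕ) : 0 ≤ lobTerm θ k := by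
  have := evenZeta_nonneg (k + 1)
  unfold lobTerm
  positivity

lemma lobTerm_add_le {θ : ℝ} (hθ : 0 ≤ θ) (k N : ℕ) :
    lobTerm θ (k + N) ≤ lobTerm θ N * ((θ / π) ^ 2) ^ k := by
  have hζ := evenZeta_le_evenZeta N.succ_ne_zero (show N + 1 ≤ k + N + 1 by omega)
  have hN := evenZeta_nonneg (N + 1)
  calc lobTerm θ (k + N)
      = 2 * θ * (θ / π) ^ (2 * (k + N + 1)) * evenZeta (k + N + 1) / (2 * (k + N : ℕ) + 3) := rfl
    _ ≤ 2 * θ * (θ / π) ^ (2 * (k + N + 1)) * evenZeta (N + 1) / (2 * N + 3) := by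
        gcongr
        omega
    _ = lobTerm θ N * ((θ / π) ^ 2) ^ k := by
        unfold lobTerm
        ring

lemma lob_le_sub_sum_lobTerm {θ : ℝ} (h0 : 0 ≤ θ) (hπ : θ < π) (N : ℕ) :
    lob θ ≤ θ * (1 - log (2 * sin θ)) - ∑ k ∈ Finset.range N, lobTerm θ k := by
  have hsum := hasSum_lobTerm ((abs_of_nonneg h0).trans_lt hπ)
  linarith [sum_le_hasSum (Finset.range N) (fun k _ => lobTerm_nonneg h0 k) hsum]

lemma sub_sum_lobTerm_sub_le_lob {θ : ℝ} (h0 : 0 ≤ θ) (hπ : θ < π) (N : ℕ) :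
    θ * (1 - log (2 * sin θ)) - ∑ k ∈ Finset.range N, lobTerm θ k
      - lobTerm θ N / (1 - (θ / π) ^ 2) ≤ lob θ := by
  have hlt : (θ / π) ^ 2 < 1 :=
    pow_lt_one₀ (by positivity) ((div_lt_one pi_pos).mpr hπ) two_ne_zero
  have htail := (hasSum_nat_add_iff' N).mpr (hasSum_lobTerm ((abs_of_nonneg h0).trans_lt hπ))
  have hgeom := (hasSum_geometric_of_lt_one (sq_nonneg _) hlt).mul_left (lobTerm θ N)
  have hle := hasSum_le (fun k => lobTerm_add_le h0 k N) htail hgeom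
  rw [← div_eq_mul_inv] at hle
  linarith

lemma lobTerm_pi_div_four (k : ℕ) :
    lobTerm (π / 4) k = π * evenZeta (k + 1) / (2 * 16 ^ (k + 1) * (2 * k + 3)) := by
  have hquarter : π / 4 / π = 1 / 4 := by field_simp
  have hsixteenth : ((1 : ℝ) / 4) ^ 2 = 1 / 16 := by norm_num
  rw [lobTerm, hquarter, pow_mul, hsixteenth, one_div_pow]
  field_simp
  norm_num

lemma log_two_mul_sin_pi_div_four : log (2 * sin (π / 4)) = log 2 / 2 := by
  rw [sin_pi_div_four, mul_div_cancel₀ _ two_ne_zero, log_sqrt zero_le_two]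

lemma sum_range_four_lobTerm_pi_div_four :
    ∑ k ∈ Finset.range 4, lobTerm (π / 4) k =
      π ^ 3 / 576 + π ^ 5 / 230400 + π ^ 7 / 54190080 + π ^ 9 / 11147673600 := by
  simp only [Finset.sum_range_succ, Finset.sum_range_zero, lobTerm_pi_div_four, Nat.reduceAdd,
    evenZeta_one, evenZeta_two, evenZeta_three, evenZeta_four]
  push_cast
  ring

lemma eight_mul_lob_pi_div_four_lt : 8 * lob (π / 4) < 3.663864 := by
  have hlob := lob_le_sub_sum_lobTerm (θ := π / 4) (by positivity) (by linarith [pi_pos]) 4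
  rw [log_two_mul_sin_pi_div_four, sum_range_four_lobTerm_pi_div_four] at hlob
  have hπ : 3.14159265 < π := by linarith [pi_gt_d20]
  have hmain : π * (2 - log 2) ≤ 3.14159266 * (2 - 0.6931471803) := by
    gcongr
    · linarith [log_two_lt_d9]
    · linarith [pi_lt_d20]
    · exact log_two_gt_d9.le
  have hpow (n : ℕ) : (3.14159265 : ℝ) ^ n ≤ π ^ n := by gcongr
  have h3 := hpow 3
  have h5 := hpow 5
  have h7 := hpow 7
  have h9 := hpow 9
  norm_num at hmain h3 h5 h7 h9 ⊢
  linarith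

lemma lt_eight_mul_lob_pi_div_four : 3.663862 < 8 * lob (π / 4) := by
  have hlob := sub_sum_lobTerm_sub_le_lob (θ := π / 4) (by positivity) (by linarith [pi_pos]) 4
  have hquarter : π / 4 / π = 1 / 4 := by field_simp
  rw [log_two_mul_sin_pi_div_four, sum_range_four_lobTerm_pi_div_four, lobTerm_pi_div_four,
    evenZeta_five, hquarter] at hlob
  have hπ : π < 3.14159266 := by linarith [pi_lt_d20]
  have hmain : 3.14159265 * (2 - 0.6931471808) ≤ π * (2 - log 2) := by
    gcongr
    · linarith [pi_gt_d20]
    · exact log_two_lt_d9.le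
  have hpow (n : ℕ) : π ^ n ≤ (3.14159266 : ℝ) ^ n := by gcongr
  have h3 := hpow 3
  have h5 := hpow 5
  have h7 := hpow 7
  have h9 := hpow 9
  have h11 := hpow 11
  norm_num at hlob hmain h3 h5 h7 h9 h11 ⊢
  linarith

/-- The volume `v_oct = 8Λ(π/4)` of the regular ideal octahedron satisfies
`|8Λ(π/4) − 3.663863| < 10⁻⁶`. -/
theorem voct_approx : |8 * lob (Real.pi / 4) - 3.663863| < 1 / 1000000 := by
  rw [abs_lt]
  constructor <;> linarith [lt_eight_mul_lob_pi_div_four, eight_mul_lob_pi_div_four_lt]
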